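/- arXiv:1804.01785 — 2 statements merged into one kernel-verified Lean document; each statement's English description precedes it below -/
import Mathlib

section
/- Let V be a nonempty finite set and f : 2^V → ℝ a normalized submodular set function. Then the core B(f) = { r ∈ ℝ^V : r(X) ≤ f(X) for all X ⊆ V, r(V) = f(V) } is nonempty. -/
open Finset

/-!
Order the elements of `V` and pay each one its marginal value over its predecessors (the greedy
vector). The payments to an initial segment telescope to its value, and by diminishing returns no
element earns more over all of its predecessors than over those lying in a given set `X`, so `X`
receives at most `f X`.
-/

section Submodular

variable {V R : Type*} [DecidableEq V] [AddCommGroup R] [PartialOrder R]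

/-- Submodularity of a set function on finite sets, with values in an ordered abelian group. -/
def IsSubmodular (f : Finset V → R) : Prop :=
  ∀ X Y : Finset V, f (X ∩ Y) + f (X ∪ Y) ≤ f X + f Y

/-- The core (base polyhedron) of the restriction of `f` to the subsets of `S`. Its members are
vectors on all of `V`, whose entries outside `S` are unconstrained. -/
def coreOn (f : Finset V → R) (S : Finset V) : Set (V → R) :=
  {r | (∀ X ⊆ S, ∑ i ∈ X, r i ≤ f X) ∧ ∑ i ∈ S, r i = f S}

variable [IsOrderedAddMonoid R] {f : Finset V → R} {A B S : Finset V} {a : V} {r : V → R}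

theorem IsSubmodular.insert_sub_le_insert_sub (hf : IsSubmodular f) (hAB : A ⊆ B) (ha : a ∉ B) :
    f (insert a B) - f B ≤ f (insert a A) - f A := by
  have hinter : insert a A ∩ B = A := by rw [insert_inter_of_notMem ha, inter_eq_left.mpr hAB]
  have hunion : insert a A ∪ B = insert a B := by rw [insert_union, union_eq_right.mpr hAB]
  have h := hf (insert a A) B
  rw [hinter, hunion, add_comm (f A)] at h
  exact sub_le_sub_iff.mpr h

theorem IsSubmodular.update_mem_coreOn_insert (hf : IsSubmodular f) (ha : a ∉ S)
    (hr : r ∈ coreOn f S) :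
    Function.update r a (f (insert a S) - f S) ∈ coreOn f (insert a S) := by
  obtain ⟨hle, heq⟩ := hr
  set c := f (insert a S) - f S with hc
  have sum_update_insert {Y : Finset V} (hY : a ∉ Y) :
      ∑ i ∈ insert a Y, Function.update r a c i = c + ∑ i ∈ Y, r i := by
    rw [sum_insert hY, Function.update_self, sum_update_of_notMem hY]
  refine ⟨fun X hX => ?_, ?_⟩
  · by_cases haX : a ∈ X
    · obtain ⟨Y, haY, rfl⟩ : ∃ Y, a ∉ Y ∧ insert a Y = X :=
        ⟨X.erase a, notMem_erase a X, insert_erase haX⟩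
      have hYS : Y ⊆ S := (insert_subset_insert_iff haY).mp hX
      calc ∑ i ∈ insert a Y, Function.update r a c i
          = c + ∑ i ∈ Y, r i := sum_update_insert haY
        _ ≤ (f (insert a Y) - f Y) + f Y :=
          add_le_add (hf.insert_sub_le_insert_sub hYS ha) (hle Y hYS)
        _ = f (insert a Y) := sub_add_cancel _ _
    · rw [sum_update_of_notMem haX]
      exact hle X ((subset_insert_iff_of_notMem haX).mp hX)
  · rw [sum_update_insert ha, heq, hc, sub_add_cancel]

theorem IsSubmodular.coreOn_nonempty (hf : IsSubmodular f) (hnorm : f ∅ = 0) (S : Finset V) :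
    (coreOn f S).Nonempty := by
  induction S using Finset.induction_on with
  | empty => exact ⟨0, fun X hX => by simp [subset_empty.mp hX, hnorm], by simp [hnorm]⟩
  | insert a S ha ih =>
    obtain ⟨r, hr⟩ := ih
    exact ⟨_, hf.update_mem_coreOn_insert ha hr⟩

theorem core_nonempty_general [Fintype V] (f : Finset V → R) (hnorm : f ∅ = 0)
    (hsub : ∀ X Y : Finset V, f (X ∩ Y) + f (X ∪ Y) ≤ f X + f Y) :
    ∃ r : V → R, (∀ X : Finset V, ∑ i ∈ X, r i ≤ f X) ∧ ∑ i, r i = f univ := by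
  obtain ⟨r, hle, heq⟩ := IsSubmodular.coreOn_nonempty hsub hnorm univ
  exact ⟨r, fun X => hle X (subset_univ X), heq⟩

end Submodular

/-- The core (base polyhedron) of a normalized submodular set function is nonempty. -/
theorem core_nonempty
    {V : Type*} [Fintype V] [DecidableEq V] [Nonempty V]
    (f : Finset V → ℝ)
    (hnorm : f ∅ = 0)
    (hsub : ∀ X Y : Finset V, f (X ∩ Y) + f (X ∪ Y) ≤ f X + f Y) :
    ∃ r : V → ℝ,
      (∀ X : Finset V, ∑ i ∈ X, r i ≤ f X) ∧ ∑ i, r i = f Finset.univ :=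
  core_nonempty_general f hnorm hsub
end

section
/- Let V be a nonempty finite set and f : 2^V → ℝ a normalized monotone submodular set function. If P is a decomposer of the game (V, f) (a partition of V with f(V) = ∑_{C∈P} f(C)), then f decomposes additively across the blocks on every subset: f(X) = ∑_{C∈P} f(X ∩ C) for all X ⊆ V. -/
open Finset

/-!
For a disjoint family `u` with join `S` and any `x ≤ S`, submodularity bounds `f x` on both sides.
Assembling `x` from its disjoint traces `x ⊓ u i` gives `f x ≤ ∑ f (x ⊓ u i)`. Enlarging `x` to `S`
one block at a time costs at most `f (u i) - f (x ⊓ u i)` at each step, because by disjointness the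
blocks already joined do not meet `u i`; hence `f S - f x ≤ ∑ f (u i) - ∑ f (x ⊓ u i)`, which is
the reverse bound once `f S = ∑ f (u i)`.
-/

/-- Submodularity of a function on a lattice, the diminishing-returns condition behind all the
estimates below; for `α = Finset V` it is submodularity of a set function. -/
def Submodular {α β : Type*} [Lattice α] [Add β] [LE β] (f : α → β) : Prop :=
  ∀ x y, f (x ⊓ y) + f (x ⊔ y) ≤ f x + f y

section

variable {ι α β : Type*} [AddCommMonoid β] [PartialOrder β] {f : α → β} {s : Finset ι} {u : ι → α}

theorem Submodular.map_finset_sup_le_sum [Lattice α] [OrderBot α] [IsOrderedAddMonoid β]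
    (hf : Submodular f) (hbot : f ⊥ = 0) (hu : s.SupIndep u) :
    f (s.sup u) ≤ ∑ i ∈ s, f (u i) := by
  induction s using Finset.cons_induction with
  | empty => simp [hbot]
  | cons i s hi ih =>
    have hdisj : Disjoint (u i) (s.sup u) := hu (subset_cons hi) (mem_cons_self i s) hi
    rw [sup_cons, sum_cons]
    calc f (u i ⊔ s.sup u) = f (u i ⊓ s.sup u) + f (u i ⊔ s.sup u) := by
          rw [hdisj.eq_bot, hbot, zero_add]
      _ ≤ f (u i) + f (s.sup u) := hf _ _
      _ ≤ f (u i) + ∑ j ∈ s, f (u j) := by gcongr; exact ih (hu.subset (subset_cons hi))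

variable [DistribLattice α] [OrderBot α]

theorem Submodular.map_sup_finset_sup_add_sum_le [IsOrderedAddMonoid β] (hf : Submodular f)
    (hu : s.SupIndep u) (x : α) :
    f (x ⊔ s.sup u) + ∑ i ∈ s, f (x ⊓ u i) ≤ f x + ∑ i ∈ s, f (u i) := by
  induction s using Finset.cons_induction with
  | empty => simp
  | cons i s hi ih =>
    have hdisj : Disjoint (s.sup u) (u i) := (hu (subset_cons hi) (mem_cons_self i s) hi).symm
    have htrace : (x ⊔ s.sup u) ⊓ u i = x ⊓ u i := by
      rw [inf_sup_right, hdisj.eq_bot, sup_bot_eq]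
    have hstep : f (x ⊓ u i) + f (x ⊔ s.sup u ⊔ u i) ≤ f (x ⊔ s.sup u) + f (u i) :=
      htrace ▸ hf (x ⊔ s.sup u) (u i)
    rw [sup_cons, sum_cons, sum_cons, sup_comm (u i), ← sup_assoc]
    calc f (x ⊔ s.sup u ⊔ u i) + (f (x ⊓ u i) + ∑ j ∈ s, f (x ⊓ u j))
        = f (x ⊓ u i) + f (x ⊔ s.sup u ⊔ u i) + ∑ j ∈ s, f (x ⊓ u j) := by abel
      _ ≤ f (x ⊔ s.sup u) + f (u i) + ∑ j ∈ s, f (x ⊓ u j) := by gcongr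
      _ = f (u i) + (f (x ⊔ s.sup u) + ∑ j ∈ s, f (x ⊓ u j)) := by abel
      _ ≤ f (u i) + (f x + ∑ j ∈ s, f (u j)) :=
          add_le_add_right (ih (hu.subset (subset_cons hi))) _
      _ = f x + (f (u i) + ∑ j ∈ s, f (u j)) := add_left_comm _ _ _

theorem decomposer_additive_general [IsOrderedCancelAddMonoid β] (hf : Submodular f)
    (hbot : f ⊥ = 0) (hu : (s : Set ι).PairwiseDisjoint u)
    (hdec : f (s.sup u) = ∑ i ∈ s, f (u i)) {x : α} (hx : x ≤ s.sup u) :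
    f x = ∑ i ∈ s, f (x ⊓ u i) := by
  apply le_antisymm
  · calc f x = f (s.sup fun i ↦ x ⊓ u i) := by
          rw [← Finset.sup_inf_distrib_left, inf_eq_left.2 hx]
      _ ≤ ∑ i ∈ s, f (x ⊓ u i) :=
          hf.map_finset_sup_le_sum hbot (hu.mono fun _ ↦ inf_le_right).supIndep
  · have hle := hf.map_sup_finset_sup_add_sum_le hu.supIndep x
    rw [sup_eq_right.2 hx, ← hdec, add_comm (f x)] at hle
    exact le_of_add_le_add_left hle

end

/-- If `P` is a decomposer of the normalized monotone submodular game `(V, f)`,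
then `f` decomposes additively across the blocks on every subset:
`f(X) = ∑_{C ∈ P} f(X ∩ C)` for all `X ⊆ V`. -/
theorem decomposer_additive
    {V : Type*} [Fintype V] [DecidableEq V] [Nonempty V]
    (f : Finset V → ℝ)
    (hnorm : f ∅ = 0)
    (hmono : ∀ X Y : Finset V, Y ⊆ X → f Y ≤ f X)
    (hsub : ∀ X Y : Finset V, f (X ∩ Y) + f (X ∪ Y) ≤ f X + f Y)
    (P : Finset (Finset V))
    (hne : ∀ C ∈ P, C.Nonempty)
    (hdisj : ∀ C ∈ P, ∀ D ∈ P, C ≠ D → Disjoint C D)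
    (hcover : P.sup id = Finset.univ)
    (hdec : f Finset.univ = ∑ C ∈ P, f C) :
    ∀ X : Finset V, f X = ∑ C ∈ P, f (X ∩ C) := by
  intro X
  exact decomposer_additive_general (u := id) hsub hnorm hdisj (by rwa [hcover])
    (hcover ▸ subset_univ X)
end
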